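/- Let w : ℕ → ℝ be strictly positive. Define the difference operator D on functions φ : ℕ → ℝ by (Dφ)(x) = √(w(x)/w(x+1))·φ(x+1) − √(w(x−1)/w(x))·φ(x−1) for x ≥ 1 and (Dφ)(0) = √(w(0)/w(1))·φ(1), and define the operator ε by (εφ)(2m) = −Σ_{k=m}^{∞} √(w(2m)/w(2k+1)) · (w(2m+1)w(2m+3)⋯w(2k+1))/(w(2m)w(2m+2)⋯w(2k)) · φ(2k+1) and (εφ)(2m+1) = Σ_{k=0}^{m} √(w(2k)/w(2m+1)) · (w(2k+1)w(2k+3)⋯w(2m+1))/(w(2k)w(2k+2)⋯w(2m)) · φ(2k). Then for every finitely supported φ : ℕ → ℝ one has D(εφ) = φ and ε(Dφ) = φ; that is, D and ε are mutually inverse on finitely supported functions. -/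

import Mathlib

open Finset

/-- The difference operator `D`: `(Dφ)(x) = √(w x / w (x+1))·φ(x+1) − √(w (x−1) / w x)·φ(x−1)`
(the second term absent at `x = 0`). -/
noncomputable def Dop (w : ℕ → ℝ) (φ : ℕ → ℝ) : ℕ → ℝ := fun x =>
  Real.sqrt (w x / w (x + 1)) * φ (x + 1) -
    (if x = 0 then 0 else Real.sqrt (w (x - 1) / w x) * φ (x - 1))

/-- The operator `ε`, defined by the parity-split sums
`(εφ)(2m) = −Σ_{k≥m} √(w(2m)/w(2k+1)) · (w(2m+1)w(2m+3)⋯w(2k+1))/(w(2m)w(2m+2)⋯w(2k)) · φ(2k+1)`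
and
`(εφ)(2m+1) = Σ_{k=0}^{m} √(w(2k)/w(2m+1)) · (w(2k+1)w(2k+3)⋯w(2m+1))/(w(2k)w(2k+2)⋯w(2m)) · φ(2k)`. -/
noncomputable def epsOp (w : ℕ → ℝ) (φ : ℕ → ℝ) : ℕ → ℝ := fun n =>
  if n % 2 = 0 then
    -(∑' k : ℕ, if n / 2 ≤ k then
        Real.sqrt (w n / w (2 * k + 1)) *
          ((∏ j ∈ Finset.range (k - n / 2 + 1), w (2 * (n / 2 + j) + 1)) /
           (∏ j ∈ Finset.range (k - n / 2 + 1), w (2 * (n / 2 + j)))) * φ (2 * k + 1)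
      else 0)
  else
    ∑ k ∈ Finset.range (n / 2 + 1),
      Real.sqrt (w (2 * k) / w n) *
        ((∏ j ∈ Finset.range (n / 2 - k + 1), w (2 * (k + j) + 1)) /
         (∏ j ∈ Finset.range (n / 2 - k + 1), w (2 * (k + j)))) * φ (2 * k)

/-- The running product `∏_{j<n} w(2j+1)/w(2j)`. -/
noncomputable def auxQ (w : ℕ → ℝ) (n : ℕ) : ℝ := ∏ j ∈ Finset.range n, (w (2 * j + 1) / w (2 * j))

lemma auxQ_pos (w : ℕ → ℝ) (hw : ∀ x, 0 < w x) (n : ℕ) : 0 < auxQ w n :=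
  Finset.prod_pos fun _ _ => div_pos (hw _) (hw _)

lemma auxQ_succ (w : ℕ → ℝ) (hw : ∀ x, 0 < w x) (n : ℕ) :
    auxQ w (n + 1) = auxQ w n * (Real.sqrt (w (2 * n + 1)) ^ 2 / Real.sqrt (w (2 * n)) ^ 2) := by
  rw [Real.sq_sqrt (hw _).le, Real.sq_sqrt (hw _).le, auxQ, Finset.prod_range_succ, auxQ]

lemma auxP (w : ℕ → ℝ) (hw : ∀ x, 0 < w x) (k m : ℕ) (h : k ≤ m) :
    (∏ j ∈ Finset.range (m - k + 1), w (2 * (k + j) + 1)) /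
      (∏ j ∈ Finset.range (m - k + 1), w (2 * (k + j))) = auxQ w (m + 1) / auxQ w k := by
  rw [← Finset.prod_div_distrib, eq_div_iff (auxQ_pos w hw k).ne', mul_comm]
  have : m + 1 = k + (m - k + 1) := by omega
  rw [this]
  exact (Finset.prod_range_add (fun j => w (2 * j + 1) / w (2 * j)) k (m - k + 1)).symm

lemma eps_odd (w : ℕ → ℝ) (hw : ∀ x, 0 < w x) (ψ : ℕ → ℝ) (m : ℕ) :
    epsOp w ψ (2 * m + 1) = auxQ w (m + 1) / Real.sqrt (w (2 * m + 1)) *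
      ∑ k ∈ Finset.range (m + 1), Real.sqrt (w (2 * k)) / auxQ w k * ψ (2 * k) := by
  have h1 : (2 * m + 1) % 2 ≠ 0 := by omega
  have h2 : (2 * m + 1) / 2 = m := by omega
  simp only [epsOp, if_neg h1, h2]
  rw [Finset.mul_sum]
  refine Finset.sum_congr rfl fun k hk => ?_
  rw [auxP w hw k m (by simp at hk; omega), Real.sqrt_div (hw _).le]
  ring

lemma eps_even (w : ℕ → ℝ) (hw : ∀ x, 0 < w x) (ψ : ℕ → ℝ) (m M : ℕ)
    (hM : ∀ k, M ≤ k → ψ (2 * k + 1) = 0) :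
    epsOp w ψ (2 * m) = -(Real.sqrt (w (2 * m)) / auxQ w m *
      ∑ k ∈ Finset.Ico m M, auxQ w (k + 1) / Real.sqrt (w (2 * k + 1)) * ψ (2 * k + 1)) := by
  have h1 : (2 * m) % 2 = 0 := by omega
  have h2 : (2 * m) / 2 = m := by omega
  simp only [epsOp, if_pos h1, h2]
  rw [tsum_eq_sum (s := Finset.Ico m M), Finset.mul_sum]
  · congr 1
    refine Finset.sum_congr rfl fun k hk => ?_
    have hk' : m ≤ k := (Finset.mem_Ico.1 hk).1
    rw [if_pos hk', auxP w hw m k hk', Real.sqrt_div (hw _).le]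
    ring
  · intro k hk
    split_ifs with h
    · rw [hM k (by simp at hk; omega)]; simp
    · rfl

lemma Dop_zero (w : ℕ → ℝ) (hw : ∀ x, 0 < w x) (ψ : ℕ → ℝ) :
    Dop w ψ 0 = Real.sqrt (w 0) / Real.sqrt (w 1) * ψ 1 := by
  simp [Dop, Real.sqrt_div (hw _).le]

lemma Dop_succ (w : ℕ → ℝ) (hw : ∀ x, 0 < w x) (ψ : ℕ → ℝ) (x : ℕ) :
    Dop w ψ (x + 1) = Real.sqrt (w (x + 1)) / Real.sqrt (w (x + 2)) * ψ (x + 2)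
      - Real.sqrt (w x) / Real.sqrt (w (x + 1)) * ψ x := by
  simp [Dop, Real.sqrt_div (hw _).le]

/-- `D` and `ε` are mutually inverse on finitely supported functions. -/
theorem Dop_epsOp_mutual_inverse (w : ℕ → ℝ) (hw : ∀ x, 0 < w x)
    (φ : ℕ → ℝ) (hφ : (Function.support φ).Finite) :
    Dop w (epsOp w φ) = φ ∧ epsOp w (Dop w φ) = φ := by
  obtain ⟨N, hN⟩ : ∃ N, ∀ k, N ≤ k → φ k = 0 := by
    obtain ⟨B, hB⟩ := hφ.bddAbove
    refine ⟨B + 1, fun k hk => ?_⟩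
    by_contra h
    have := hB (Function.mem_support.2 h)
    omega
  have hs : ∀ x, Real.sqrt (w x) ≠ 0 := fun x => (Real.sqrt_pos.2 (hw x)).ne'
  have hQ : ∀ x, auxQ w x ≠ 0 := fun x => (auxQ_pos w hw x).ne'
  constructor
  · funext x
    obtain ⟨m, rfl | rfl⟩ : ∃ m, x = 2 * m ∨ x = 2 * m + 1 := ⟨x / 2, by omega⟩
    · rcases m with _ | m
      · have e := eps_odd w hw φ 0
        have q := auxQ_succ w hw 0
        have h0 := hs 0
        have h1 := hs 1
        have h2 := hQ 0
        simp only [Nat.mul_zero, Nat.zero_add, Finset.sum_range_one] at e q ⊢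
        rw [Dop_zero w hw, e, q]
        field_simp
      · have e := eps_odd w hw φ (m + 1)
        have e' := eps_odd w hw φ m
        have q := auxQ_succ w hw (m + 1)
        have h0 := hs (2 * m + 1)
        have h1 := hs (2 * m + 2)
        have h3 := hs (2 * m + 3)
        have h2 := hQ (m + 1)
        rw [Finset.sum_range_succ, q] at e
        simp only [show 2 * (m + 1) = 2 * m + 1 + 1 by ring] at e q ⊢
        rw [Dop_succ w hw, e, e']
        simp only [show 2 * m + 1 + 1 + 1 = 2 * m + 3 by ring,
          show 2 * m + 1 + 1 = 2 * m + 2 by ring, show 2 * m + 1 + 2 = 2 * m + 3 by ring]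
        field_simp
        ring
    · have e := eps_even w hw φ (m + 1) (N + m + 1) fun k hk => hN _ (by omega)
      have e' := eps_even w hw φ m (N + m + 1) fun k hk => hN _ (by omega)
      have q := auxQ_succ w hw m
      have h0 := hs (2 * m)
      have h1 := hs (2 * m + 1)
      have h3 := hs (2 * m + 2)
      have h2 := hQ m
      rw [Finset.sum_eq_sum_Ico_succ_bot (by omega), q] at e'
      rw [q] at e
      rw [Dop_succ w hw, show 2 * m + 2 = 2 * (m + 1) by ring, e, e']
      simp only [show 2 * (m + 1) = 2 * m + 2 by ring]
      field_simp
      ring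
  · funext x
    obtain ⟨m, rfl | rfl⟩ : ∃ m, x = 2 * m ∨ x = 2 * m + 1 := ⟨x / 2, by omega⟩
    · rw [eps_even w hw (Dop w φ) m (N + m + 1) fun k hk => by
        rw [Dop_succ w hw, hN _ (by omega), hN _ (by omega)]; simp]
      have key : ∀ k, auxQ w (k + 1) / Real.sqrt (w (2 * k + 1)) * Dop w φ (2 * k + 1)
          = auxQ w (k + 1) / Real.sqrt (w (2 * (k + 1))) * φ (2 * (k + 1))
            - auxQ w k / Real.sqrt (w (2 * k)) * φ (2 * k) := by
        intro k
        have h0 := hs (2 * k)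
        have h1 := hs (2 * k + 1)
        have h3 := hs (2 * k + 2)
        have h2 := hQ k
        rw [Dop_succ w hw, auxQ_succ w hw k, show 2 * (k + 1) = 2 * k + 2 by ring]
        field_simp
      rw [Finset.sum_congr rfl fun k _ => key k,
        Finset.sum_Ico_sub (fun k => auxQ w k / Real.sqrt (w (2 * k)) * φ (2 * k)) (by omega),
        hN (2 * (N + m + 1)) (by omega)]
      have h0 := hs (2 * m)
      have h2 := hQ m
      field_simp
      ring
    · rw [eps_odd w hw]
      have key : ∀ n, ∑ k ∈ Finset.range (n + 1), Real.sqrt (w (2 * k)) / auxQ w k * Dop w φ (2 * k)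
          = Real.sqrt (w (2 * n + 1)) / auxQ w (n + 1) * φ (2 * n + 1) := by
        intro n
        induction n with
        | zero =>
          have q := auxQ_succ w hw 0
          have h0 := hs 0
          have h1 := hs 1
          have h2 := hQ 0
          simp only [Nat.mul_zero, Nat.zero_add, Finset.sum_range_one] at q ⊢
          rw [Dop_zero w hw, q]
          field_simp
        | succ n ih =>
          have h0 := hs (2 * n + 1)
          have h1 := hs (2 * n + 2)
          have h3 := hs (2 * n + 3)
          have h2 := hQ (n + 1)
          rw [Finset.sum_range_succ, ih, auxQ_succ w hw (n + 1),
            show 2 * (n + 1) = 2 * n + 1 + 1 by ring, Dop_succ w hw]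
          simp only [show 2 * n + 1 + 1 + 1 = 2 * n + 3 by ring,
            show 2 * n + 1 + 1 = 2 * n + 2 by ring, show 2 * n + 1 + 2 = 2 * n + 3 by ring]
          field_simp
          ring
      rw [key]
      have h0 := hs (2 * m + 1)
      have h2 := hQ (m + 1)
      field_simp
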